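/- Let k ≥ 6 and let H'_k be the graph with vertex set {u_1, …, u_{k−1}, v_1, …, v_{k−1}, w} and edge set consisting of all edges u_iu_j for 1 ≤ i < j ≤ k−1, all edges v_iv_j for 1 ≤ i < j ≤ k−1, the edges u_2v_1 and u_2v_2, and the edges wu_i and wv_i for all i > 2. Then every proper (k−1)-coloring φ of H'_k satisfies φ(u_1) = φ(w). -/

import Mathlib

open SimpleGraph

section Defs

variable {V : Type*}

instance instDecidableInduceAdj (G : SimpleGraph V) [DecidableRel G.Adj] (s : Set V) :
    DecidableRel (G.induce s).Adj := fun a b => ‹DecidableRel G.Adj› a.1 b.1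

instance instDecidableDeleteEdgeAdj [DecidableEq V] (G : SimpleGraph V) [DecidableRel G.Adj]
    (e : Sym2 V) : DecidableRel (G.deleteEdges {e}).Adj := fun a b =>
  decidable_of_iff (G.Adj a b ∧ ¬s(a, b) = e) (by simp)

/-- The `k`-potential of a vertex subset `R` of a graph `G`:
`ρ_{k,G}(R) = (k+1)(k-2)|R| - 2(k-1)|E(G[R])|`, where `G[R]` is the induced subgraph. -/
def potential (k : ℕ) (G : SimpleGraph V) [Fintype V] [DecidableEq V] [DecidableRel G.Adj]
    (R : Finset V) : ℤ :=
  ((k : ℤ) + 1) * ((k : ℤ) - 2) * R.card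
    - 2 * ((k : ℤ) - 1) * ((G.induce (R : Set V)).edgeFinset.card)

/-- A graph is `k`-critical if its chromatic number is `k` and every proper subgraph is
`(k-1)`-colorable. -/
def IsKCritical (k : ℕ) (G : SimpleGraph V) : Prop :=
  G.chromaticNumber = k ∧ ∀ H : SimpleGraph V, H < G → H.Colorable (k - 1)

/-- The graph underlying the DHGO-composition: delete the edge `xy` from `G₁`, split the vertex
`z` of `G₂` into two vertices, identify `x` with the half of `z` joined to the neighbors of `z`
lying in `P` and identify `y` with the half joined to the remaining neighbors of `z`. -/
def dhgoGraph {V₁ V₂ : Type*} (G₁ : SimpleGraph V₁) (G₂ : SimpleGraph V₂)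
    (x y : V₁) (z : V₂) (P : Set V₂) :
    SimpleGraph (V₁ ⊕ {w : V₂ // w ≠ z}) :=
  SimpleGraph.fromRel (fun a b =>
    match a, b with
    | Sum.inl a, Sum.inl b => G₁.Adj a b ∧ s(a, b) ≠ s(x, y)
    | Sum.inl a, Sum.inr b => (a = x ∧ (b : V₂) ∈ P) ∨ (a = y ∧ (b : V₂) ∈ G₂.neighborSet z \ P)
    | Sum.inr a, Sum.inr b => G₂.Adj a b
    | _, _ => False)

/-- `G` is a DHGO-composition of `G₁` and `G₂`: some edge `xy` of `G₁` is deleted, some vertex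
`z` of `G₂` is split into two vertices of positive degree (its neighborhood is partitioned into
two nonempty parts `P` and `N(z) \ P`), and `x`, `y` are identified with the two halves of `z`. -/
def IsDHGO {V₁ V₂ U : Type*} (G : SimpleGraph U) (G₁ : SimpleGraph V₁) (G₂ : SimpleGraph V₂) :
    Prop :=
  ∃ (x y : V₁) (z : V₂) (P : Set V₂),
    G₁.Adj x y ∧ P ⊆ G₂.neighborSet z ∧ P.Nonempty ∧ (G₂.neighborSet z \ P).Nonempty ∧
    Nonempty (G ≃g dhgoGraph G₁ G₂ x y z P)

/-- `k`-Ore graphs on the canonical finite vertex types `Fin n`: graphs obtained from copies of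
`K_k` by a sequence of DHGO-compositions. -/
inductive IsOreFin (k : ℕ) : ∀ {n : ℕ}, SimpleGraph (Fin n) → Prop
  | complete {n : ℕ} {G : SimpleGraph (Fin n)}
      (h : Nonempty (G ≃g (⊤ : SimpleGraph (Fin k)))) : IsOreFin k G
  | comp {n₁ n₂ n : ℕ} {G₁ : SimpleGraph (Fin n₁)} {G₂ : SimpleGraph (Fin n₂)}
      {G : SimpleGraph (Fin n)} (h₁ : IsOreFin k G₁) (h₂ : IsOreFin k G₂)
      (h : IsDHGO G G₁ G₂) : IsOreFin k G

/-- A graph is a `k`-Ore graph if it is obtained from copies of `K_k` by a sequence of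
DHGO-compositions. -/
def IsKOre (k : ℕ) {V : Type*} (G : SimpleGraph V) : Prop :=
  ∃ (n : ℕ) (H : SimpleGraph (Fin n)), IsOreFin k H ∧ Nonempty (G ≃g H)

/-- `y_k = max {2k - 6, k² - 5k + 2}`. -/
def yk (k : ℕ) : ℤ := max (2 * (k : ℤ) - 6) ((k : ℤ) ^ 2 - 5 * (k : ℤ) + 2)

/-- A `k`-critical graph is `k`-extremal if `2(k-1)|E(G)| = (k+1)(k-2)|V(G)| - k(k-3)`. -/
def IsKExtremal (k : ℕ) {V : Type*} [Fintype V] [DecidableEq V] (G : SimpleGraph V)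
    [DecidableRel G.Adj] : Prop :=
  IsKCritical k G ∧
    2 * ((k : ℤ) - 1) * G.edgeFinset.card =
      ((k : ℤ) + 1) * ((k : ℤ) - 2) * Fintype.card V - (k : ℤ) * ((k : ℤ) - 3)

/-- A graph is 3-connected if it has more than 3 vertices and deleting any set of at most 2
vertices leaves it connected. -/
def IsThreeConnected {V : Type*} [Fintype V] (G : SimpleGraph V) : Prop :=
  3 < Fintype.card V ∧ ∀ s : Set V, s.ncard ≤ 2 → (G.induce sᶜ).Connected

/-- `Q` is a `k`-quasi-`xy`-vertex: `G[Q]` is `(k-1)`-colorable, every proper `(k-1)`-coloring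
of `G[Q]` gives `x` and `y` the same color, and for every edge `e` of `G[Q]` the graph
`G[Q] - e` has a proper `(k-1)`-coloring giving `x` and `y` different colors. -/
def IsQuasiVertex (k : ℕ) {V : Type*} [DecidableEq V] (G : SimpleGraph V) (x y : V)
    (Q : Set V) : Prop :=
  ∃ (hx : x ∈ Q) (hy : y ∈ Q),
    (G.induce Q).Colorable (k - 1) ∧
    (∀ C : (G.induce Q).Coloring (Fin (k - 1)), C ⟨x, hx⟩ = C ⟨y, hy⟩) ∧
    (∀ a b : Q, (G.induce Q).Adj a b →
      ∃ C : ((G.induce Q).deleteEdges {s(a, b)}).Coloring (Fin (k - 1)),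
        C ⟨x, hx⟩ ≠ C ⟨y, hy⟩)

/-- A set `S` of vertices is standard if `ρ_{k,G}(S) = (k+1)(k-2)`, `G` has a separating set
`{x,y} ⊆ S` such that `S - {x,y}` induces a component of `G - {x,y}`, and `S` is a
`k`-quasi-`xy`-vertex. -/
def IsStandardSet (k : ℕ) {V : Type*} [Fintype V] [DecidableEq V] (G : SimpleGraph V)
    [DecidableRel G.Adj] (S : Finset V) : Prop :=
  potential k G S = ((k : ℤ) + 1) * ((k : ℤ) - 2) ∧
  ∃ x y : V, x ≠ y ∧ x ∈ S ∧ y ∈ S ∧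
    ¬(G.induce ({x, y}ᶜ : Set V)).Connected ∧
    (G.induce ((S : Set V) \ {x, y})).Connected ∧
    (∀ a ∈ (S : Set V) \ {x, y}, ∀ b : V, G.Adj a b → b ∈ (S : Set V) ∪ {x, y}) ∧
    IsQuasiVertex k G x y (S : Set V)

end Defs

/-- The graph `H'_k = H_{k,2} - {u₁v₁, u₁v₂}`: two disjoint `(k-1)`-cliques
`{u_1, …, u_{k-1}}` and `{v_1, …, v_{k-1}}` (indexed here from `0` to `k-2`), the cross edges
`u_2v_1` and `u_2v_2`, and a vertex `w` joined to `u_i` and `v_i` for all `i > 2`. -/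
def HkPrime (k : ℕ) : SimpleGraph (Fin (k - 1) ⊕ Fin (k - 1) ⊕ Unit) :=
  SimpleGraph.fromRel (fun a b =>
    match a, b with
    | Sum.inl _, Sum.inl _ => True
    | Sum.inr (Sum.inl _), Sum.inr (Sum.inl _) => True
    | Sum.inl i, Sum.inr (Sum.inl j) => i.val = 1 ∧ j.val ≤ 1
    | Sum.inr (Sum.inr _), Sum.inl i => 2 ≤ i.val
    | Sum.inr (Sum.inr _), Sum.inr (Sum.inl i) => 2 ≤ i.val
    | _, _ => False)

/-- **Claim.** Let `k ≥ 6`. Then every proper `(k-1)`-coloring `φ` of `H'_k` satisfies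
`φ(u_1) = φ(w)`. -/
theorem HkPrime_coloring_u₁_eq_w (k : ℕ) (hk : 6 ≤ k)
    (C : (HkPrime k).Coloring (Fin (k - 1))) :
    C (Sum.inl ⟨0, by omega⟩) = C (Sum.inr (Sum.inr ())) := by
  have hu : Function.Injective (fun i : Fin (k - 1) => C (Sum.inl i)) := by
    intro i j h
    by_contra hne
    exact C.valid (v := Sum.inl i) (w := Sum.inl j) (by simp [HkPrime, hne]) h
  have hv : Function.Injective (fun i : Fin (k - 1) => C (Sum.inr (Sum.inl i))) := by
    intro i j h
    by_contra hne
    exact C.valid (v := Sum.inr (Sum.inl i)) (w := Sum.inr (Sum.inl j))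
      (by simp [HkPrime, hne]) h
  obtain ⟨i, hi⟩ := (Finite.injective_iff_surjective.mp hu) (C (Sum.inr (Sum.inr ())))
  obtain ⟨j, hj⟩ := (Finite.injective_iff_surjective.mp hv) (C (Sum.inr (Sum.inr ())))
  simp only at hi hj
  have hi2 : ¬ 2 ≤ i.val := fun h =>
    C.valid (v := Sum.inl i) (w := Sum.inr (Sum.inr ())) (by simp [HkPrime, h]) hi
  have hj2 : ¬ 2 ≤ j.val := fun h =>
    C.valid (v := Sum.inr (Sum.inl j)) (w := Sum.inr (Sum.inr ())) (by simp [HkPrime, h]) hj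
  have hi1 : i.val ≠ 1 := fun h =>
    C.valid (v := Sum.inl i) (w := Sum.inr (Sum.inl j))
      (by simp [HkPrime, h]; omega) (hi.trans hj.symm)
  have h0 : i = ⟨0, by omega⟩ := Fin.ext (by simp; omega)
  rw [← h0, hi]
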